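/- arXiv:2002.00598 — 3 statements merged into one kernel-verified Lean document; each statement's English description precedes it below -/
import Mathlib

section
/- For every γ > 0, the function x ↦ F(γ, x) is strictly monotone decreasing on (0, ∞). -/
open Real intervalIntegral

/-- `σ⁺(γ,x) = 2 − γ²x + √((2−γ²x)² + 4(γ+1)²)`. -/
noncomputable def sigmaPlus (γ x : ℝ) : ℝ :=
  2 - γ ^ 2 * x + Real.sqrt ((2 - γ ^ 2 * x) ^ 2 + 4 * (γ + 1) ^ 2)

/-- `σ⁻(γ,x) = 2 − γ²x − √((2−γ²x)² + 4(γ+1)²)`. -/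
noncomputable def sigmaMinus (γ x : ℝ) : ℝ :=
  2 - γ ^ 2 * x - Real.sqrt ((2 - γ ^ 2 * x) ^ 2 + 4 * (γ + 1) ^ 2)

/-- `F(γ,x) = σ⁺(γ,x) · (∫₀¹ r^{3/2}/√((1−r)(σ⁺ r − σ⁻)) dr) /
    (∫₀¹ r^{1/2}/√((1−r)(σ⁺ r − σ⁻)) dr)`. -/
noncomputable def F (γ x : ℝ) : ℝ :=
  sigmaPlus γ x *
    (∫ r in (0:ℝ)..1, r ^ ((3:ℝ)/2) /
      Real.sqrt ((1 - r) * (sigmaPlus γ x * r - sigmaMinus γ x))) /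
    (∫ r in (0:ℝ)..1, r ^ ((1:ℝ)/2) /
      Real.sqrt ((1 - r) * (sigmaPlus γ x * r - sigmaMinus γ x)))

/-- The lemniscatic constant `ϖ = 2∫₀¹ dt/√(1−t⁴)`. -/
noncomputable def varpi : ℝ := 2 * ∫ t in (0:ℝ)..1, 1 / Real.sqrt (1 - t ^ 4)

/-!
Since `σ⁺σ⁻ = -4(γ+1)²`, writing `κ = -σ⁻/σ⁺` gives `σ⁺ r - σ⁻ = σ⁺(r + κ)` and
`√κ = 2|γ+1|/σ⁺`. With `J p κ = ∫₀¹ rᵖ/√((1-r)(r+κ)) dr` the factors `√σ⁺` cancel in the quotient,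
so `F = 2|γ+1| · J (3/2) κ / (√κ · J (1/2) κ)`. Here `J (3/2) κ` decreases in `κ`, while
`√κ · J (1/2) κ = ∫₀¹ √r/√((1-r)(r/κ+1)) dr` increases, and `κ` increases with `x`.
-/

theorem integral_lt_integral_of_forall_Ioo_lt {f g : ℝ → ℝ} {a b : ℝ} (hab : a < b)
    (hf : IntervalIntegrable f MeasureTheory.volume a b)
    (hg : IntervalIntegrable g MeasureTheory.volume a b)
    (hlt : ∀ x ∈ Set.Ioo a b, f x < g x) :
    ∫ x in a..b, f x < ∫ x in a..b, g x := by
  rw [← sub_pos, ← integral_sub hg hf]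
  exact intervalIntegral_pos_of_pos_on (hg.sub hf) (fun x hx ↦ sub_pos.2 (hlt x hx)) hab

theorem intervalIntegrable_rpow_mul_one_sub_rpow {p q : ℝ} (hp : -1 < p) (hq : -1 < q) :
    IntervalIntegrable (fun r : ℝ ↦ r ^ p * (1 - r) ^ q) MeasureTheory.volume 0 1 := by
  have complex_beta := Complex.betaIntegral_convergent (u := ((p + 1 : ℝ) : ℂ))
    (v := ((q + 1 : ℝ) : ℂ)) (by simpa using by linarith) (by simpa using by linarith)
  rw [intervalIntegrable_iff] at complex_beta ⊢
  refine MeasureTheory.IntegrableOn.congr_fun complex_beta.re (fun r hr ↦ ?_) measurableSet_uIoc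
  rw [Set.uIoc_of_le zero_le_one] at hr
  have ofReal_integrand : (r : ℂ) ^ (((p + 1 : ℝ) : ℂ) - 1) * (1 - (r : ℂ)) ^
      (((q + 1 : ℝ) : ℂ) - 1) = ((r ^ p * (1 - r) ^ q : ℝ) : ℂ) := by
    rw [Complex.ofReal_mul, Complex.ofReal_cpow hr.1.le, Complex.ofReal_cpow (sub_nonneg.2 hr.2)]
    push_cast
    simp only [add_sub_cancel_right]
  exact congrArg Complex.re ofReal_integrand

/-- The integral `∫₀¹ rᵖ/√((1-r) g(r)) dr`. The weight `g` is arbitrary so that both `r + κ` and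
its rescaling `r/κ + 1` are covered. -/
noncomputable def invSqrtIntegral (p : ℝ) (g : ℝ → ℝ) : ℝ :=
  ∫ r in (0 : ℝ)..1, r ^ p / √((1 - r) * g r)

section InvSqrtIntegral

variable {p q : ℝ} {g h : ℝ → ℝ}

theorem intervalIntegrable_rpow_div_sqrt (hp : -1 < p) (hg : ContinuousOn g (Set.Icc 0 1))
    (hpos : ∀ r ∈ Set.Icc 0 1, 0 < g r) :
    IntervalIntegrable (fun r ↦ r ^ p / √((1 - r) * g r)) MeasureTheory.volume 0 1 := by
  have beta_integrable :=
    intervalIntegrable_rpow_mul_one_sub_rpow hp (show (-1 : ℝ) < -(1 / 2) by norm_num)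
  have factor_continuous : ContinuousOn (fun r ↦ (√(g r))⁻¹) (Set.uIcc 0 1) := by
    rw [Set.uIcc_of_le zero_le_one]
    exact hg.sqrt.inv₀ fun r hr ↦ (sqrt_pos.2 (hpos r hr)).ne'
  refine (beta_integrable.mul_continuousOn factor_continuous).congr fun r hr ↦ ?_
  rw [Set.uIoc_of_le zero_le_one] at hr
  have one_sub_nonneg : 0 ≤ 1 - r := sub_nonneg.2 hr.2
  simp only [sqrt_mul one_sub_nonneg, sqrt_eq_rpow (1 - r), rpow_neg one_sub_nonneg,
    div_eq_mul_inv, mul_inv, mul_assoc]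

theorem invSqrtIntegral_pos (hp : -1 < p) (hg : ContinuousOn g (Set.Icc 0 1))
    (hpos : ∀ r ∈ Set.Icc 0 1, 0 < g r) : 0 < invSqrtIntegral p g := by
  refine intervalIntegral_pos_of_pos_on (intervalIntegrable_rpow_div_sqrt hp hg hpos)
    (fun r hr ↦ ?_) one_pos
  exact div_pos (rpow_pos_of_pos hr.1 p)
    (sqrt_pos.2 (mul_pos (sub_pos.2 hr.2) (hpos r (Set.Ioo_subset_Icc_self hr))))

theorem invSqrtIntegral_lt_of_forall_lt (hp : -1 < p) (hg : ContinuousOn g (Set.Icc 0 1))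
    (hh : ContinuousOn h (Set.Icc 0 1)) (hpos : ∀ r ∈ Set.Icc 0 1, 0 < g r)
    (hlt : ∀ r ∈ Set.Ioo 0 1, g r < h r) : invSqrtIntegral p h < invSqrtIntegral p g := by
  have closure_eq : closure (Set.Ioo (0 : ℝ) 1) = Set.Icc 0 1 := closure_Ioo zero_ne_one
  have le_on_Icc : ∀ r ∈ Set.Icc 0 1, g r ≤ h r := fun r hr ↦
    le_on_closure (fun s hs ↦ (hlt s hs).le) (closure_eq ▸ hg) (closure_eq ▸ hh) (closure_eq ▸ hr)
  refine integral_lt_integral_of_forall_Ioo_lt one_pos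
    (intervalIntegrable_rpow_div_sqrt hp hh fun r hr ↦ (hpos r hr).trans_le (le_on_Icc r hr))
    (intervalIntegrable_rpow_div_sqrt hp hg hpos) fun r hr ↦ ?_
  have one_sub_pos : 0 < 1 - r := sub_pos.2 hr.2
  have weight_pos : 0 < g r := hpos r (Set.Ioo_subset_Icc_self hr)
  have numerator_pos : 0 < r ^ p := rpow_pos_of_pos hr.1 p
  have weight_lt := hlt r hr
  gcongr

theorem invSqrtIntegral_const_mul {c : ℝ} (hc : 0 ≤ c) :
    invSqrtIntegral p (fun r ↦ c * g r) = invSqrtIntegral p g / √c := by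
  simp only [invSqrtIntegral, mul_left_comm _ c, sqrt_mul hc, ← integral_div, div_div,
    mul_comm (√c)]

theorem strictAntiOn_invSqrtIntegral_add (hp : -1 < p) :
    StrictAntiOn (fun κ ↦ invSqrtIntegral p (· + κ)) (Set.Ioi 0) := by
  intro κ hκ μ _ hκμ
  exact invSqrtIntegral_lt_of_forall_lt hp (by fun_prop) (by fun_prop)
    (fun r hr ↦ add_pos_of_nonneg_of_pos hr.1 hκ) fun r _ ↦ add_lt_add_right hκμ r

theorem sqrt_mul_invSqrtIntegral_add {κ : ℝ} (hκ : 0 < κ) :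
    √κ * invSqrtIntegral p (· + κ) = invSqrtIntegral p (fun r ↦ r / κ + 1) := by
  have scaled_weight : (· + κ) = fun r ↦ κ * (r / κ + 1) := by
    funext r
    field_simp
  rw [scaled_weight, invSqrtIntegral_const_mul hκ.le, mul_div_cancel₀ _ (sqrt_pos.2 hκ).ne']

theorem strictMonoOn_sqrt_mul_invSqrtIntegral_add (hp : -1 < p) :
    StrictMonoOn (fun κ ↦ √κ * invSqrtIntegral p (· + κ)) (Set.Ioi 0) := by
  intro κ hκ μ hμ hκμ
  simp only [sqrt_mul_invSqrtIntegral_add hκ, sqrt_mul_invSqrtIntegral_add hμ]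
  rw [Set.mem_Ioi] at hκ hμ
  refine invSqrtIntegral_lt_of_forall_lt hp (by fun_prop) (by fun_prop)
    (fun r hr ↦ ?_) fun r hr ↦ ?_
  · exact add_pos_of_nonneg_of_pos (div_nonneg hr.1 hμ.le) one_pos
  · exact add_lt_add_left (div_lt_div_of_pos_left hr.1 hκ hκμ) 1

theorem strictAntiOn_invSqrtIntegral_div (hp : -1 < p) (hq : -1 < q) :
    StrictAntiOn (fun κ ↦ invSqrtIntegral p (· + κ) / (√κ * invSqrtIntegral q (· + κ)))
      (Set.Ioi 0) := by
  intro κ hκ μ hμ hκμ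
  have integral_pos {s : ℝ} (hs : -1 < s) : 0 < invSqrtIntegral s (· + κ) :=
    invSqrtIntegral_pos hs (by fun_prop) fun r hr ↦ add_pos_of_nonneg_of_pos hr.1 hκ
  exact div_lt_div₀ (strictAntiOn_invSqrtIntegral_add hp hκ hμ hκμ)
    (strictMonoOn_sqrt_mul_invSqrtIntegral_add hq hκ hμ hκμ).le
    (integral_pos hp).le (mul_pos (sqrt_pos.2 hκ) (integral_pos hq))

end InvSqrtIntegral

theorem add_sqrt_sq_add_pos {c : ℝ} (hc : 0 < c) (t : ℝ) : 0 < t + √(t ^ 2 + c) := by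
  have neg_lt_sqrt : -t < √(t ^ 2 + c) := lt_sqrt_of_sq_lt (by linarith [neg_sq t])
  linarith

theorem strictMono_add_sqrt_sq_add {c : ℝ} (hc : 0 < c) :
    StrictMono fun t : ℝ ↦ t + √(t ^ 2 + c) := by
  intro s t hst
  have sqrt_lt : √(s ^ 2 + c) < √(t ^ 2 + c) + (t - s) := by
    rw [sqrt_lt' (add_pos_of_nonneg_of_pos (sqrt_nonneg _) (sub_pos.2 hst))]
    have sq_diff : (√(t ^ 2 + c) + (t - s)) ^ 2 - (s ^ 2 + c) =
        2 * ((t - s) * (t + √(t ^ 2 + c))) := by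
      linear_combination sq_sqrt (by positivity : 0 ≤ t ^ 2 + c)
    linarith [mul_pos (sub_pos.2 hst) (add_sqrt_sq_add_pos hc t)]
  dsimp only
  linarith

section Sigma

variable {γ : ℝ}

theorem sigmaPlus_pos (hγ : γ + 1 ≠ 0) (x : ℝ) : 0 < sigmaPlus γ x :=
  add_sqrt_sq_add_pos (mul_pos four_pos (sq_pos_of_ne_zero hγ)) _

theorem sigmaPlus_mul_sigmaMinus (γ x : ℝ) :
    sigmaPlus γ x * sigmaMinus γ x = -(2 * (γ + 1)) ^ 2 := by
  have sq_sqrt_disc := sq_sqrt (by positivity : 0 ≤ (2 - γ ^ 2 * x) ^ 2 + 4 * (γ + 1) ^ 2)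
  rw [sigmaPlus, sigmaMinus]
  linear_combination -sq_sqrt_disc

theorem strictAnti_sigmaPlus (hγ₀ : γ ≠ 0) (hγ₁ : γ + 1 ≠ 0) : StrictAnti (sigmaPlus γ) := by
  have strictAnti_linear : StrictAnti fun x ↦ 2 - γ ^ 2 * x := fun _ _ hxy ↦
    sub_lt_sub_left (mul_lt_mul_of_pos_left hxy (sq_pos_of_ne_zero hγ₀)) 2
  exact (strictMono_add_sqrt_sq_add
    (mul_pos four_pos (sq_pos_of_ne_zero hγ₁))).comp_strictAnti strictAnti_linear

/-- The parameter `κ = -σ⁻/σ⁺`, for which `σ⁺ r - σ⁻ = σ⁺ (r + κ)`; the integrals in `F` depend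
on `x` through `κ` alone, up to a power of `σ⁺`. -/
noncomputable def sigmaRatio (γ x : ℝ) : ℝ :=
  -sigmaMinus γ x / sigmaPlus γ x

theorem sigmaRatio_eq_sq (hγ : γ + 1 ≠ 0) (x : ℝ) :
    sigmaRatio γ x = (2 * (γ + 1) / sigmaPlus γ x) ^ 2 := by
  have plus_ne_zero := (sigmaPlus_pos hγ x).ne'
  rw [sigmaRatio]
  field_simp
  linear_combination -sigmaPlus_mul_sigmaMinus γ x

theorem sqrt_sigmaRatio (hγ : γ + 1 ≠ 0) (x : ℝ) :
    √(sigmaRatio γ x) = 2 * |γ + 1| / sigmaPlus γ x := by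
  rw [sigmaRatio_eq_sq hγ, sqrt_sq_eq_abs, abs_div, abs_mul, abs_two,
    abs_of_pos (sigmaPlus_pos hγ x)]

theorem sigmaRatio_pos (hγ : γ + 1 ≠ 0) (x : ℝ) : 0 < sigmaRatio γ x := by
  rw [sigmaRatio_eq_sq hγ]
  exact sq_pos_of_ne_zero (div_ne_zero (mul_ne_zero two_ne_zero hγ) (sigmaPlus_pos hγ x).ne')

theorem strictMono_sigmaRatio (hγ₀ : γ ≠ 0) (hγ₁ : γ + 1 ≠ 0) : StrictMono (sigmaRatio γ) := by
  intro x y hxy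
  rw [← sqrt_lt_sqrt_iff (sigmaRatio_pos hγ₁ x).le, sqrt_sigmaRatio hγ₁, sqrt_sigmaRatio hγ₁]
  exact div_lt_div_of_pos_left (mul_pos two_pos (abs_pos.2 hγ₁)) (sigmaPlus_pos hγ₁ y)
    (strictAnti_sigmaPlus hγ₀ hγ₁ hxy)

theorem invSqrtIntegral_sigma (hγ : γ + 1 ≠ 0) (p x : ℝ) :
    invSqrtIntegral p (fun r ↦ sigmaPlus γ x * r - sigmaMinus γ x) =
      invSqrtIntegral p (· + sigmaRatio γ x) / √(sigmaPlus γ x) := by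
  rw [← invSqrtIntegral_const_mul (sigmaPlus_pos hγ x).le]
  congr 1
  funext r
  rw [mul_add, sigmaRatio, mul_div_cancel₀ _ (sigmaPlus_pos hγ x).ne', sub_eq_add_neg]

theorem F_eq_mul_invSqrtIntegral_div (hγ : γ + 1 ≠ 0) (x : ℝ) :
    F γ x = 2 * |γ + 1| * (invSqrtIntegral (3 / 2) (· + sigmaRatio γ x) /
      (√(sigmaRatio γ x) * invSqrtIntegral (1 / 2) (· + sigmaRatio γ x))) := by
  have plus_pos := sigmaPlus_pos hγ x
  have abs_add_one_ne_zero : |γ + 1| ≠ 0 := abs_ne_zero.2 hγ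
  calc F γ x
      = sigmaPlus γ x * invSqrtIntegral (3 / 2) (fun r ↦ sigmaPlus γ x * r - sigmaMinus γ x) /
          invSqrtIntegral (1 / 2) (fun r ↦ sigmaPlus γ x * r - sigmaMinus γ x) := rfl
    _ = _ := by
      rw [invSqrtIntegral_sigma hγ, invSqrtIntegral_sigma hγ, sqrt_sigmaRatio hγ]
      field_simp

end Sigma

theorem statement_3_general {γ : ℝ} (hγ₀ : γ ≠ 0) (hγ₁ : γ ≠ -1) : StrictAnti (F γ) := by
  have hγ : γ + 1 ≠ 0 := fun h ↦ hγ₁ (eq_neg_of_add_eq_zero_left h)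
  intro x y hxy
  rw [F_eq_mul_invSqrtIntegral_div hγ, F_eq_mul_invSqrtIntegral_div hγ]
  exact mul_lt_mul_of_pos_left
    (strictAntiOn_invSqrtIntegral_div (by norm_num) (by norm_num) (sigmaRatio_pos hγ x)
      (sigmaRatio_pos hγ y) (strictMono_sigmaRatio hγ₀ hγ hxy))
    (mul_pos two_pos (abs_pos.2 hγ))

/-- For every `γ > 0` the function `x ↦ F(γ,x)` is strictly monotone decreasing on `(0,∞)`. -/
theorem statement_3 (γ : ℝ) (hγ : 0 < γ) :
    StrictAntiOn (fun x => F γ x) (Set.Ioi (0:ℝ)) :=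
  (statement_3_general hγ.ne' (by linarith)).strictAntiOn _
end

section
/- For every real γ ≠ 0, the limit of F(γ, x) as x → ∞ is 0. -/
open Real intervalIntegral

/-!
Since `r ^ (3/2) ≤ r ^ (1/2)` on `[0, 1]`, the quotient of integrals in `F` lies in `[0, 1]`, so
`0 ≤ F γ x ≤ σ⁺(γ, x)`. Now `σ⁺ = u + √(u² + c)` with `u = 2 - γ² x → -∞`, and multiplying by the
conjugate `u - √(u² + c) → -∞` gives the constant `-c`; hence `σ⁺ → 0`.
-/

open Set Filter Topology MeasureTheory

theorem tendsto_add_sqrt_sq_add_atBot (c : ℝ) :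
    Tendsto (fun u : ℝ => u + √(u ^ 2 + c)) atBot (𝓝 0) := by
  have conj_atBot : Tendsto (fun u : ℝ => u - √(u ^ 2 + c)) atBot atBot :=
    tendsto_atBot_mono (fun u => sub_le_self u (sqrt_nonneg _)) tendsto_id
  have radicand_atTop : Tendsto (fun u : ℝ => u ^ 2 + c) atBot atTop := by
    simp only [sq]
    exact tendsto_atTop_add_const_right _ c (tendsto_id.atBot_mul_atBot₀ tendsto_id)
  refine (conj_atBot.const_div_atBot (-c)).congr' ?_
  filter_upwards [conj_atBot.eventually_lt_atBot 0, radicand_atTop.eventually_ge_atTop 0]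
    with u conj_neg radicand_nonneg
  rw [div_eq_iff conj_neg.ne]
  linear_combination sq_sqrt radicand_nonneg

theorem abs_le_sqrt_sq_add {c : ℝ} (hc : 0 ≤ c) (u : ℝ) : |u| ≤ √(u ^ 2 + c) :=
  abs_le_sqrt (le_add_of_nonneg_right hc)

section EllipticMoment

/-- The moment of order `s` of the elliptic weight `1 / √((1 - r) (a r - b))` on `[0, 1]`. With
`a = σ⁺` and `b = σ⁻`, the orders `3 / 2` and `1 / 2` give the two integrals in `F`. -/
noncomputable def ellipticMoment (a b s : ℝ) : ℝ :=
  ∫ r in (0 : ℝ)..1, r ^ s / √((1 - r) * (a * r - b))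

theorem ellipticMoment_nonneg (a b s : ℝ) : 0 ≤ ellipticMoment a b s :=
  integral_nonneg zero_le_one fun _ hr => div_nonneg (rpow_nonneg hr.1 s) (sqrt_nonneg _)

theorem intervalIntegrable_inv_sqrt_one_sub :
    IntervalIntegrable (fun r : ℝ => (√(1 - r))⁻¹) volume 0 1 := by
  have integrable_inv_sqrt : IntervalIntegrable (fun r : ℝ => (√r)⁻¹) volume 0 1 := by
    refine (intervalIntegrable_rpow' (r := -(1 / 2)) (by norm_num)).congr fun r hr => ?_
    rw [uIoc_of_le zero_le_one] at hr
    simp only [rpow_neg hr.1.le, sqrt_eq_rpow]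
  simpa using (integrable_inv_sqrt.comp_sub_left 1).symm

variable {a b s : ℝ}

theorem rpow_div_sqrt_le_inv_sqrt_mul {r : ℝ} (hb : b ≤ 0) (hab : b < a) (hs : 1 / 2 ≤ s)
    (hr : r ∈ Ioc (0 : ℝ) 1) :
    r ^ s / √((1 - r) * (a * r - b)) ≤ (√(a - b))⁻¹ * (√(1 - r))⁻¹ := by
  have chord_le : r * (a - b) ≤ a * r - b := by
    linarith [mul_nonneg (neg_nonneg.2 hb) (sub_nonneg.2 hr.2)]
  have chord_pos : 0 < r * (a - b) := mul_pos hr.1 (sub_pos.2 hab)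
  have rpow_mul_le : r ^ s * √(a - b) ≤ √(a * r - b) :=
    calc r ^ s * √(a - b) ≤ √r * √(a - b) := by
          rw [sqrt_eq_rpow r]
          gcongr ?_ * _
          exact rpow_le_rpow_of_exponent_ge hr.1 hr.2 hs
      _ = √(r * (a - b)) := (sqrt_mul hr.1.le _).symm
      _ ≤ √(a * r - b) := sqrt_le_sqrt chord_le
  rw [sqrt_mul (sub_nonneg.2 hr.2), mul_comm, ← div_div, div_eq_mul_inv _ √(1 - r)]
  gcongr
  rwa [div_le_iff₀ (sqrt_pos.2 (chord_pos.trans_le chord_le)), inv_mul_eq_div,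
    le_div_iff₀ (sqrt_pos.2 (sub_pos.2 hab))]

theorem intervalIntegrable_rpow_div_sqrt_s6 (hb : b ≤ 0) (hab : b < a) (hs : 1 / 2 ≤ s) :
    IntervalIntegrable (fun r : ℝ => r ^ s / √((1 - r) * (a * r - b))) volume 0 1 := by
  refine (intervalIntegrable_inv_sqrt_one_sub.const_mul (√(a - b))⁻¹).mono_fun'
    (Measurable.aestronglyMeasurable (by fun_prop)) ?_
  rw [uIoc_of_le zero_le_one]
  filter_upwards [ae_restrict_mem measurableSet_Ioc] with r hr
  rw [norm_of_nonneg (div_nonneg (rpow_nonneg hr.1.le s) (sqrt_nonneg _))]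
  exact rpow_div_sqrt_le_inv_sqrt_mul hb hab hs hr

theorem antitoneOn_ellipticMoment (hb : b ≤ 0) (hab : b < a) :
    AntitoneOn (ellipticMoment a b) (Ici (1 / 2)) := fun _ hs _ ht hst =>
  integral_mono_on_of_le_Ioo zero_le_one (intervalIntegrable_rpow_div_sqrt_s6 hb hab ht)
    (intervalIntegrable_rpow_div_sqrt_s6 hb hab hs) fun _ hr =>
      div_le_div_of_nonneg_right (rpow_le_rpow_of_exponent_ge hr.1 hr.2.le hst) (sqrt_nonneg _)

end EllipticMoment

theorem sigmaPlus_nonneg (γ x : ℝ) : 0 ≤ sigmaPlus γ x :=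
  neg_le_iff_add_nonneg'.1 <| (neg_le_abs _).trans (abs_le_sqrt_sq_add (by positivity) _)

theorem sigmaMinus_nonpos (γ x : ℝ) : sigmaMinus γ x ≤ 0 :=
  sub_nonpos.2 <| (le_abs_self _).trans (abs_le_sqrt_sq_add (by positivity) _)

theorem tendsto_sigmaPlus_atTop {γ : ℝ} (hγ : γ ≠ 0) :
    Tendsto (sigmaPlus γ) atTop (𝓝 0) := by
  have affine_atBot : Tendsto (fun x : ℝ => 2 - γ ^ 2 * x) atTop atBot :=
    tendsto_atBot_add_const_left _ 2 <|
      tendsto_neg_atTop_atBot.comp (tendsto_id.const_mul_atTop (by positivity))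
  exact (tendsto_add_sqrt_sq_add_atBot _).comp affine_atBot

theorem F_eq_sigmaPlus_mul_ellipticMoment_div (γ x : ℝ) :
    F γ x = sigmaPlus γ x * (ellipticMoment (sigmaPlus γ x) (sigmaMinus γ x) (3 / 2) /
      ellipticMoment (sigmaPlus γ x) (sigmaMinus γ x) (1 / 2)) :=
  mul_div_assoc _ _ _

theorem F_nonneg (γ x : ℝ) : 0 ≤ F γ x := by
  rw [F_eq_sigmaPlus_mul_ellipticMoment_div]
  exact mul_nonneg (sigmaPlus_nonneg γ x)
    (div_nonneg (ellipticMoment_nonneg _ _ _) (ellipticMoment_nonneg _ _ _))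

theorem F_le_sigmaPlus (γ x : ℝ) : F γ x ≤ sigmaPlus γ x := by
  rw [F_eq_sigmaPlus_mul_ellipticMoment_div]
  obtain sigmaPlus_eq | sigmaPlus_pos := (sigmaPlus_nonneg γ x).eq_or_lt
  · simp [← sigmaPlus_eq]
  · have sigmaMinus_lt := (sigmaMinus_nonpos γ x).trans_lt sigmaPlus_pos
    have moment_le := antitoneOn_ellipticMoment (sigmaMinus_nonpos γ x) sigmaMinus_lt
      (mem_Ici.2 le_rfl) (mem_Ici.2 (by norm_num)) (by norm_num : (1 / 2 : ℝ) ≤ 3 / 2)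
    exact mul_le_of_le_one_right sigmaPlus_pos.le
      (div_le_one_of_le₀ moment_le (ellipticMoment_nonneg _ _ _))

/-- For every `γ ≠ 0` we have `lim_{x→∞} F(γ,x) = 0`. -/
theorem statement_6 (γ : ℝ) (hγ : γ ≠ 0) :
    Filter.Tendsto (fun x => F γ x) Filter.atTop (nhds 0) :=
  squeeze_zero (F_nonneg γ) (F_le_sigmaPlus γ) (tendsto_sigmaPlus_atTop hγ)
end

section
/- For γ > 0, the equality F(γ, 2/γ²) = 2 holds if and only if γ = (3π − ϖ²)/ϖ², where ϖ = 2∫₀¹ dt/√(1−t⁴) is the lemniscatic constant. (Physically: the energy constant κ = 2/(γ²q̄₁) − 1 of the unique periodic orbit vanishes exactly for this value of γ.) -/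
/-!
At `x = 2 / γ²` one has `σ⁺ = -σ⁻ = 2|γ + 1|`, so up to a common factor both integrals in `F`
become `∫₀¹ rˢ / √(1 - r²) dr = B((s + 1) / 2, 1 / 2) / 2`, while `ϖ = B(1 / 4, 1 / 2) / 2` by the
substitution `y = t⁴`. The recurrence `B(5 / 4, 1 / 2) = B(1 / 4, 1 / 2) / 3` and the product
`B(1 / 4, 1 / 2) B(3 / 4, 1 / 2) = 4π` then give `F(γ, 2 / γ²) = 2|γ + 1| ϖ² / (3π)`.
-/

open Real intervalIntegral

open MeasureTheory ProbabilityTheory Set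

lemma intervalIntegral_comp_rpow {E : Type*} [NormedAddCommGroup E] [NormedSpace ℝ E]
    (g : ℝ → E) {p c : ℝ} (hp : 0 < p) (hc : 0 ≤ c) :
    ∫ x in (0 : ℝ)..c, (p * x ^ (p - 1)) • g (x ^ p) = ∫ y in (0 : ℝ)..c ^ p, g y := by
  rw [integral_of_le hc, integral_of_le (rpow_nonneg hc p), ← Ioi_inter_Iic, ← Ioi_inter_Iic,
    ← setIntegral_indicator measurableSet_Iic, ← setIntegral_indicator measurableSet_Iic,
    ← integral_comp_rpow_Ioi_of_pos (g := (Iic (c ^ p)).indicator g) hp]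
  refine setIntegral_congr_fun measurableSet_Ioi fun x (hx : 0 < x) ↦ ?_
  simp only [indicator_apply, mem_Iic, rpow_le_rpow_iff hx.le hc hp, smul_ite, smul_zero]

lemma integral_rpow_mul_one_sub_rpow {a b : ℝ} (ha : 0 < a) (hb : 0 < b) :
    ∫ x in (0 : ℝ)..1, x ^ (a - 1) * (1 - x) ^ (b - 1) = beta a b := by
  suffices h : ((∫ x in (0 : ℝ)..1, x ^ (a - 1) * (1 - x) ^ (b - 1) : ℝ) : ℂ) =
      Complex.betaIntegral a b by
    rw [beta_eq_betaIntegralReal a b ha hb, ← h, Complex.ofReal_re]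
  rw [Complex.betaIntegral, ← intervalIntegral.integral_ofReal]
  refine integral_congr fun x hx ↦ ?_
  rw [uIcc_of_le zero_le_one] at hx
  simp [Complex.ofReal_cpow hx.1, Complex.ofReal_cpow (sub_nonneg.2 hx.2)]

lemma integral_rpow_mul_one_sub_rpow_rpow {p q s : ℝ} (hp : 0 < p) (hq : 0 < q) (hs : -1 < s) :
    ∫ r in (0 : ℝ)..1, r ^ s * (1 - r ^ p) ^ (q - 1) = beta ((s + 1) / p) q / p := by
  have hs' : 0 < s + 1 := by linarith
  rw [eq_div_iff hp.ne', ← integral_rpow_mul_one_sub_rpow (div_pos hs' hp) hq,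
    ← intervalIntegral.integral_mul_const]
  have hsub := intervalIntegral_comp_rpow
    (fun y ↦ y ^ ((s + 1) / p - 1) * (1 - y) ^ (q - 1)) hp zero_le_one
  rw [one_rpow] at hsub
  rw [← hsub, integral_of_le zero_le_one, integral_of_le zero_le_one]
  refine setIntegral_congr_fun measurableSet_Ioc fun r hr ↦ ?_
  have hpow : r ^ (p - 1) * (r ^ p) ^ ((s + 1) / p - 1) = r ^ s := by
    rw [← rpow_mul hr.1.le, ← rpow_add hr.1]
    congr 1
    field_simp
    ring
  rw [smul_eq_mul, ← hpow]
  ring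

lemma integral_rpow_div_sqrt_one_sub_rpow {p s : ℝ} (hp : 0 < p) (hs : -1 < s) :
    ∫ r in (0 : ℝ)..1, r ^ s / √(1 - r ^ p) = beta ((s + 1) / p) (1 / 2) / p := by
  rw [← integral_rpow_mul_one_sub_rpow_rpow hp one_half_pos hs]
  refine integral_congr fun r hr ↦ ?_
  rw [uIcc_of_le zero_le_one] at hr
  have h : 0 ≤ 1 - r ^ p := sub_nonneg.2 (rpow_le_one hr.1 hr.2 hp.le)
  rw [div_eq_mul_inv, sqrt_eq_rpow, ← rpow_neg h]
  norm_num

lemma integral_rpow_div_sqrt_one_sub_mul_add {c s : ℝ} (hc : 0 ≤ c) (hs : -1 < s) :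
    ∫ r in (0 : ℝ)..1, r ^ s / √((1 - r) * (c * r + c)) =
      beta ((s + 1) / 2) (1 / 2) / 2 / √c := by
  rw [← integral_rpow_div_sqrt_one_sub_rpow two_pos hs, ← intervalIntegral.integral_div]
  refine integral_congr fun r _ ↦ ?_
  have h : (1 - r) * (c * r + c) = (1 - r ^ (2 : ℝ)) * c := by rw [rpow_two]; ring
  rw [h, sqrt_mul' _ hc, div_div]

lemma beta_add_one_left {a b : ℝ} (ha : a ≠ 0) (hab : a + b ≠ 0) :
    beta (a + 1) b = a / (a + b) * beta a b := by
  rw [beta, beta, add_right_comm, Gamma_add_one ha, Gamma_add_one hab, mul_assoc a,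
    mul_div_mul_comm]

lemma beta_one_half_mul_beta_add_one_half {a : ℝ} (ha : 0 < a) :
    beta a (1 / 2) * beta (a + 1 / 2) (1 / 2) = π / a := by
  rw [beta, beta, add_assoc, add_halves, Gamma_add_one ha.ne', Gamma_one_half_eq]
  field_simp
  exact sq_sqrt pi_pos.le

lemma varpi_eq_beta : varpi = beta (1 / 4) (1 / 2) / 2 := by
  have h := integral_rpow_div_sqrt_one_sub_rpow (p := 4) (s := 0) four_pos (by norm_num)
  simp only [rpow_zero, rpow_ofNat, zero_add] at h
  rw [varpi, h]
  ring

lemma varpi_pos : 0 < varpi := by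
  rw [varpi_eq_beta]
  exact half_pos (beta_pos (by norm_num) one_half_pos)

lemma beta_five_fourths_one_half : beta (5 / 4) (1 / 2) = 2 * varpi / 3 := by
  have h : (5 : ℝ) / 4 = 1 / 4 + 1 := by norm_num
  rw [h, beta_add_one_left (by norm_num) (by norm_num), varpi_eq_beta]
  ring

lemma beta_three_fourths_one_half : beta (3 / 4) (1 / 2) = 2 * π / varpi := by
  have h : (3 : ℝ) / 4 = 1 / 4 + 1 / 2 := by norm_num
  rw [eq_div_iff varpi_pos.ne', varpi_eq_beta, h]
  linarith [beta_one_half_mul_beta_add_one_half (a := 1 / 4) (by norm_num)]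

section OppositeRoots

variable {γ x : ℝ}

lemma sigmaPlus_of_sq_mul_eq_two (h : γ ^ 2 * x = 2) : sigmaPlus γ x = 2 * |γ + 1| := by
  rw [sigmaPlus, h, ← sqrt_sq (by positivity : 0 ≤ 2 * |γ + 1|), mul_pow, sq_abs]
  norm_num

lemma sigmaMinus_of_sq_mul_eq_two (h : γ ^ 2 * x = 2) : sigmaMinus γ x = -(2 * |γ + 1|) := by
  rw [← sigmaPlus_of_sq_mul_eq_two h, sigmaMinus, sigmaPlus, h]
  ring

lemma F_of_sq_mul_eq_two (h : γ ^ 2 * x = 2) (hγ : γ ≠ -1) :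
    F γ x = 2 * |γ + 1| * varpi ^ 2 / (3 * π) := by
  have hc : 0 < 2 * |γ + 1| := by
    have : γ + 1 ≠ 0 := fun h' ↦ hγ (eq_neg_of_add_eq_zero_left h')
    positivity
  have hnum : ((3 : ℝ) / 2 + 1) / 2 = 5 / 4 := by norm_num
  have hden : ((1 : ℝ) / 2 + 1) / 2 = 3 / 4 := by norm_num
  have hϖ := varpi_pos
  simp only [F, sigmaPlus_of_sq_mul_eq_two h, sigmaMinus_of_sq_mul_eq_two h, sub_neg_eq_add]
  rw [integral_rpow_div_sqrt_one_sub_mul_add hc.le (by norm_num),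
    integral_rpow_div_sqrt_one_sub_mul_add hc.le (by norm_num), hnum, hden,
    beta_five_fourths_one_half, beta_three_fourths_one_half]
  field_simp

end OppositeRoots

theorem statement_8_general {γ : ℝ} (hγ₀ : γ ≠ 0) (hγ₁ : γ ≠ -1) :
    F γ (2 / γ ^ 2) = 2 ↔ |γ + 1| = 3 * π / varpi ^ 2 := by
  have hϖ := varpi_pos
  rw [F_of_sq_mul_eq_two (mul_div_cancel₀ 2 (pow_ne_zero 2 hγ₀)) hγ₁,
    div_eq_iff (by positivity), eq_div_iff (by positivity), mul_assoc,
    mul_right_inj' two_ne_zero]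

/-- For `γ > 0`, `F(γ, 2/γ²) = 2` iff `γ = (3π − ϖ²)/ϖ²`. -/
theorem statement_8 (γ : ℝ) (hγ : 0 < γ) :
    F γ (2 / γ ^ 2) = 2 ↔ γ = (3 * π - varpi ^ 2) / varpi ^ 2 := by
  rw [statement_8_general hγ.ne' (by linarith), abs_of_pos (by linarith), sub_div,
    div_self (pow_ne_zero 2 varpi_pos.ne'), eq_sub_iff_add_eq]
end
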